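/- Up to Cayley isomorphism, there are exactly ten S-rings over the elementary abelian group E_9 of order 9. -/

import Mathlib

open scoped Pointwise

/-- The element `\underline{X} = Σ_{x∈X} x` of the integral group ring `ℤG`. -/
noncomputable def grpSum {G : Type*} [Group G] [Fintype G] (X : Set G) :
    MonoidAlgebra ℤ G :=
  ∑ x : G, X.indicator (fun g => MonoidAlgebra.single g (1 : ℤ)) x

/-- A Schur ring (S-ring) over a finite group `G`, described by its partition
into basic sets: (S1) `{1}` is a basic set, (S2) the class of basic sets is
closed under inverses, (S3) the ℤ-span of the sums `\underline{X}` is closed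
under multiplication (i.e. is a subring of `ℤG`). -/
structure SchurRing (G : Type*) [Group G] [Fintype G] where
  basicSets : Set (Set G)
  nonempty_mem : ∀ X ∈ basicSets, X.Nonempty
  cover : ∀ g : G, ∃ X ∈ basicSets, g ∈ X
  disjoint' : ∀ X ∈ basicSets, ∀ Y ∈ basicSets, X ≠ Y → X ∩ Y = ∅
  one_mem : {(1 : G)} ∈ basicSets
  inv_mem : ∀ X ∈ basicSets, X⁻¹ ∈ basicSets
  mul_mem : ∀ X ∈ basicSets, ∀ Y ∈ basicSets,
    grpSum X * grpSum Y ∈ Submodule.span ℤ (grpSum '' basicSets)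

namespace SchurRing

variable {G : Type*} [Group G] [Fintype G]

/-- An `𝒜`-set: a union of basic sets. -/
def IsASet (A : SchurRing G) (S : Set G) : Prop :=
  ∃ T ⊆ A.basicSets, S = ⋃₀ T

/-- An `𝒜`-subgroup: a subgroup that is an `𝒜`-set. -/
def IsASubgroup (A : SchurRing G) (H : Subgroup G) : Prop :=
  A.IsASet (H : Set G)

/-- `𝒜` is schurian: its basic sets are the orbits of the stabilizer of `1`
in some group `K` with `G_right ≤ K ≤ Sym(G)`. -/
def IsSchurian (A : SchurRing G) : Prop :=
  ∃ K : Subgroup (Equiv.Perm G), (∀ g : G, Equiv.mulRight g ∈ K) ∧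
    A.basicSets = Set.range fun x : G =>
      MulAction.orbit (MulAction.stabilizer K (1 : G)) x

/-- `𝒜` is cyclotomic: its basic sets are the orbits of a subgroup of `Aut(G)`. -/
def IsCyclotomic (A : SchurRing G) : Prop :=
  ∃ M : Subgroup (MulAut G),
    A.basicSets = Set.range fun x : G => MulAction.orbit M x

/-- `𝒜` is trivial: its basic sets are `{1}` and `G ∖ {1}`. -/
def IsTrivial (A : SchurRing G) : Prop :=
  A.basicSets ⊆ {{(1 : G)}, {(1 : G)}ᶜ}

/-- `𝒜 = 𝒜_H ⊗ 𝒜_K`: an internal tensor product decomposition of `𝒜`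
with respect to the internal direct product `G = H × K`. -/
def IsTensorDecomp (A : SchurRing G) (H K : Subgroup G) : Prop :=
  A.IsASubgroup H ∧ A.IsASubgroup K ∧ H ⊓ K = ⊥ ∧ H ⊔ K = ⊤ ∧
  ∀ X ∈ A.basicSets, ∃ X₁ ∈ A.basicSets, ∃ X₂ ∈ A.basicSets,
    X₁ ⊆ (H : Set G) ∧ X₂ ⊆ (K : Set G) ∧ X = X₁ * X₂

/-- `𝒜` is the `U/L`-wreath product: `U`, `L` are `𝒜`-subgroups, `L ⊴ G`,
`L ≤ U`, and `L ≤ rad(X)` for every basic set `X` outside `U`. -/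
def IsWreathSection (A : SchurRing G) (U L : Subgroup G) : Prop :=
  A.IsASubgroup U ∧ A.IsASubgroup L ∧ L ≤ U ∧ L.Normal ∧
  ∀ X ∈ A.basicSets, ¬ X ⊆ (U : Set G) →
    ∀ g ∈ L, (g * ·) '' X = X ∧ (· * g) '' X = X

end SchurRing

/-- A finite group is a Schur group if every S-ring over it is schurian. -/
def IsSchurGroup (G : Type*) [Group G] [Fintype G] : Prop :=
  ∀ A : SchurRing G, A.IsSchurian

/-- A Cayley isomorphism between S-rings: a group isomorphism mapping the
basic sets of `𝒜` onto the basic sets of `𝒜'`. -/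
def IsCayleyIso {G G' : Type*} [Group G] [Fintype G] [Group G'] [Fintype G']
    (A : SchurRing G) (A' : SchurRing G') (f : G ≃* G') : Prop :=
  (fun X : Set G => ⇑f '' X) '' A.basicSets = A'.basicSets

/-!
Besides `{1}` being a basic set, only two consequences of the axioms are needed: the inverse of a
basic set is a basic set, and a product of basic sets is, as a set, a union of basic sets. If two
elements `a` and `b ∉ {a, a⁻¹}` lie in the same basic set, an automorphism moves them to `(1, 1)`
and `(1, -1)`. A basic set `X` disjoint from its inverse satisfies `X ∩ X² = ∅`, because no subset
of `E₉` disjoint from its inverse lies in its own square; this leaves only the line `x = 1` and the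
pair `{(1, 1), (1, -1)}` as the basic set of `(1, 1)`. A symmetric basic set contains `(±1, ±1)`,
and one distinguishes which coordinate axes it meets. If there is no such pair `a`, `b`, every basic
set is contained in some `{g, g⁻¹}`, and either all or none of these sets are basic. Conversely,
each of the ten partitions found is the orbit partition of a group of automorphisms, hence gives an
S-ring, and the number of ordered pairs of elements in a common basic set distinguishes them.
-/

namespace SchurRing

open Finset Multiplicative

section Group

variable {G : Type*} [Group G]

/-- A weakening of the notion of the partition into basic sets of an S-ring: the product of two
classes is only required to be a union of classes as a set, without regard to multiplicities. -/
structure IsSchurRel (r : Setoid G) : Prop where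
  eq_one : ∀ {g}, r g 1 → g = 1
  inv : ∀ {g h}, r g h → r g⁻¹ h⁻¹
  exists_mul_eq : ∀ {a b g}, r g (a * b) → ∃ a' b', r a' a ∧ r b' b ∧ a' * b' = g

namespace IsSchurRel

variable {r : Setoid G}

lemma comap (hr : IsSchurRel r) (f : G ≃* G) : IsSchurRel (r.comap f) where
  eq_one h := f.map_eq_one_iff.mp (hr.eq_one (by simpa [Setoid.comap_rel] using h))
  inv h := by simpa [Setoid.comap_rel] using hr.inv h
  exists_mul_eq {a b g} h := by
    rw [Setoid.comap_rel, map_mul] at h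
    obtain ⟨a', b', ha, hb, hab⟩ := hr.exists_mul_eq h
    exact ⟨f.symm a', f.symm b', by simpa [Setoid.comap_rel], by simpa [Setoid.comap_rel],
      by rw [← map_mul, hab, f.symm_apply_apply]⟩

lemma rel_one_iff (hr : IsSchurRel r) {g : G} : r g 1 ↔ g = 1 :=
  ⟨hr.eq_one, fun h => h ▸ r.refl g⟩

lemma rel_inv_comm (hr : IsSchurRel r) {g h : G} : r g h⁻¹ ↔ r g⁻¹ h :=
  ⟨fun hg => by simpa using hr.inv hg, fun hg => by simpa using hr.inv hg⟩

lemma rel_mul_left (hr : IsSchurRel r) {a : G} (ha : ∀ b, r b a → b = a) {g h : G} (hgh : r g h) :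
    r (a * g) (a * h) := by
  obtain ⟨b, k, hb, hk, rfl⟩ := hr.exists_mul_eq (a := a⁻¹) (b := a * h) (by simpa using hgh)
  obtain rfl : b = a⁻¹ := inv_eq_iff_eq_inv.mp (ha _ (hr.rel_inv_comm.mp hb))
  simpa using hk

lemma rel_inv_mul_iff (hr : IsSchurRel r) {a : G} (ha : ∀ b, r b a → b = a) {g h : G} :
    r (a⁻¹ * g) h ↔ r g (a * h) := by
  have ha' (b : G) (hb : r b a⁻¹) : b = a⁻¹ :=
    inv_eq_iff_eq_inv.mp (ha _ (hr.rel_inv_comm.mp hb))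
  exact ⟨fun hgh => by simpa using hr.rel_mul_left ha hgh,
    fun hgh => by simpa using hr.rel_mul_left ha' hgh⟩

end IsSchurRel

/-- Translating a class `{b, b⁻¹}` by a singleton class `{a}` gives the class `{ab, ab⁻¹}`, which
is not of the form `{g, g⁻¹}`. -/
lemma IsSchurRel.eq_bot_or_rel_inv {G : Type*} [CommGroup G] {r : Setoid G} (hr : IsSchurRel r)
    (hG : ∀ g : G, g * g = 1 → g = 1) (h : ∀ g h, r g h → g = h ∨ g = h⁻¹) :
    r = ⊥ ∨ ∀ g, r g⁻¹ g := by
  by_contra! ⟨hbot, a, ha⟩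
  have ha_singleton (b : G) (hb : r b a) : b = a :=
    (h b a hb).resolve_right fun hba => ha (hba ▸ hb)
  refine hbot (eq_bot_iff.mpr fun b c hbc => ?_)
  rcases h b c hbc with rfl | rfl
  · rfl
  rcases h _ _ (hr.rel_mul_left ha_singleton hbc) with hac | hac
  · exact mul_left_cancel hac
  · have : a = 1 := hG a (by
      rwa [mul_inv, mul_left_inj, eq_inv_iff_mul_eq_one] at hac)
    simp [this] at ha

end Group

section FiniteGroup

variable {G : Type*} [Group G] [Fintype G]

lemma coeff_grpSum (X : Set G) (g : G) : (grpSum X).coeff g = X.indicator 1 g := by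
  classical
  simp only [grpSum, MonoidAlgebra.coeff_sum, Finsupp.finsetSum_apply, Set.indicator_apply]
  rw [Finset.sum_eq_single g] <;> aesop

lemma coeff_grpSum_mul_grpSum (X Y : Set G) (g : G) :
    (grpSum X * grpSum Y).coeff g = ({x | x ∈ X ∧ x⁻¹ * g ∈ Y}.ncard : ℤ) := by
  classical
  have hX : grpSum X = ∑ x : G, MonoidAlgebra.single x (X.indicator 1 x : ℤ) :=
    Finset.sum_congr rfl fun x _ => by by_cases hx : x ∈ X <;> simp [hx]
  rw [hX, Finset.sum_mul, MonoidAlgebra.coeff_sum, Finsupp.finsetSum_apply,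
    Set.ncard_eq_toFinset_card', Finset.card_eq_sum_ones, Set.toFinset_ofPred, Finset.sum_filter]
  push_cast
  refine Finset.sum_congr rfl fun x _ => ?_
  rw [MonoidAlgebra.coeff_single_mul_apply, coeff_grpSum]
  by_cases hx : x ∈ X <;> by_cases hy : x⁻¹ * g ∈ Y <;> simp [hx, hy]

lemma mem_span_grpSum_classes_iff (r : Setoid G) (f : MonoidAlgebra ℤ G) :
    f ∈ Submodule.span ℤ (grpSum '' r.classes) ↔ ∀ g h, r g h → f.coeff g = f.coeff h := by
  classical
  constructor
  · intro hf g h hgh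
    induction hf using Submodule.span_induction with
    | mem f hf =>
      obtain ⟨_, ⟨a, rfl⟩, rfl⟩ := hf
      have : r g a ↔ r h a := ⟨r.trans (r.symm hgh), r.trans hgh⟩
      simp [coeff_grpSum, Set.indicator_apply, this]
    | zero => rfl
    | add f₁ f₂ _ _ h₁ h₂ => simp [h₁, h₂]
    | smul n f _ hf => rw [MonoidAlgebra.coeff_smul_apply, MonoidAlgebra.coeff_smul_apply, hf]
  · intro hf
    have hsum : f = ∑ q : Quotient r, f.coeff q.out • grpSum {x | r x q.out} := by
      ext g
      rw [MonoidAlgebra.coeff_sum, Finsupp.finsetSum_apply,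
        Finset.sum_eq_single (Quotient.mk r g)]
      · have hg : r g (Quotient.mk r g).out := r.symm (Quotient.mk_out g)
        rw [MonoidAlgebra.coeff_smul_apply, coeff_grpSum, ← hf _ _ hg]
        simp [hg]
      · intro q _ hq
        have hg : ¬ r g q.out := fun hg => hq (by rw [← q.out_eq]; exact Quotient.sound (r.symm hg))
        rw [MonoidAlgebra.coeff_smul_apply, coeff_grpSum]
        simp [hg]
      · simp
    rw [hsum]
    exact Submodule.sum_mem _ fun q _ => Submodule.smul_mem _ _
      (Submodule.subset_span ⟨_, r.mem_classes _, rfl⟩)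

lemma isPartition_basicSets (A : SchurRing G) : Setoid.IsPartition A.basicSets := by
  refine ⟨fun h => Set.not_nonempty_empty (A.nonempty_mem _ h), fun g => ?_⟩
  obtain ⟨X, hX, hg⟩ := A.cover g
  refine ⟨X, ⟨hX, hg⟩, fun Y ⟨hY, hg'⟩ => ?_⟩
  by_contra hne
  exact Set.notMem_empty g (A.disjoint' Y hY X hX hne ▸ ⟨hg', hg⟩)

/-- The equivalence relation whose classes are the basic sets. -/
def setoid (A : SchurRing G) : Setoid G :=
  Setoid.mkClasses A.basicSets A.isPartition_basicSets.2

lemma classes_setoid (A : SchurRing G) : A.setoid.classes = A.basicSets :=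
  Setoid.classes_mkClasses _ A.isPartition_basicSets

lemma isSchurRel_setoid (A : SchurRing G) : IsSchurRel A.setoid := by
  have hclass (g : G) : {x | A.setoid x g} ∈ A.basicSets :=
    A.classes_setoid ▸ A.setoid.mem_classes g
  have hrel {X : Set G} (hX : X ∈ A.basicSets) {g h : G} (hg : g ∈ X) (hh : h ∈ X) :
      A.setoid g h :=
    A.setoid.rel_iff_exists_classes.mpr ⟨X, A.classes_setoid.symm ▸ hX, hg, hh⟩
  refine ⟨fun {g} hg => ?_, fun {g h} hgh => ?_, fun {a b g} hg => ?_⟩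
  · have hone : {x | A.setoid x 1} = {1} := Setoid.eq_of_mem_classes
      (A.setoid.mem_classes 1) (A.setoid.refl 1) (A.classes_setoid.symm ▸ A.one_mem) rfl
    exact hone.subset hg
  · exact hrel (A.inv_mem _ (hclass h)) (by simpa using hgh) (by simp)
  · have hcoeff := (mem_span_grpSum_classes_iff A.setoid _).mp
      (A.classes_setoid.symm ▸ A.mul_mem _ (hclass a) _ (hclass b)) _ _ hg
    rw [coeff_grpSum_mul_grpSum, coeff_grpSum_mul_grpSum, Nat.cast_inj] at hcoeff
    have hpos : {x | x ∈ {x | A.setoid x a} ∧ x⁻¹ * g ∈ {x | A.setoid x b}}.ncard ≠ 0 := by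
      rw [hcoeff]
      exact Set.ncard_ne_zero_of_mem (a := a) (by simp)
    obtain ⟨x, hx, hy⟩ := Set.nonempty_of_ncard_ne_zero hpos
    exact ⟨x, x⁻¹ * g, hx, hy, mul_inv_cancel_left x g⟩

/-- The S-ring of an equivalence relation whose automorphisms act transitively on each class. -/
def ofHomogeneous (r : Setoid G) (h_one : ∀ g, r g 1 → g = 1)
    (h_trans : ∀ g h, r g h → ∃ f : G ≃* G, f g = h ∧ ∀ x, r (f x) x) : SchurRing G where
  basicSets := r.classes
  nonempty_mem _ hX := Setoid.nonempty_of_mem_partition r.isPartition_classes hX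
  cover g := ⟨_, r.mem_classes g, r.refl g⟩
  disjoint' X hX Y hY hXY :=
    (r.isPartition_classes.pairwiseDisjoint hX hY hXY).inter_eq
  one_mem := ⟨1, Set.ext fun g => ⟨fun hg => hg ▸ r.refl 1, h_one g⟩⟩
  inv_mem := by
    have hinv {g h : G} (hgh : r g h) : r g⁻¹ h⁻¹ := by
      obtain ⟨f, rfl, hf⟩ := h_trans g h hgh
      exact map_inv f g ▸ r.symm (hf g⁻¹)
    rintro _ ⟨g, rfl⟩
    exact ⟨g⁻¹, Set.ext fun h =>
      ⟨fun hh => by simpa using hinv hh, fun hh => by simpa using hinv hh⟩⟩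
  mul_mem := by
    rintro _ ⟨a, rfl⟩ _ ⟨b, rfl⟩
    refine (mem_span_grpSum_classes_iff r _).mpr fun g h hgh => ?_
    obtain ⟨f, rfl, hf⟩ := h_trans g h hgh
    have hmem (x y : G) : r (f x) y ↔ r x y := ⟨r.trans (r.symm (hf x)), r.trans (hf x)⟩
    rw [coeff_grpSum_mul_grpSum, coeff_grpSum_mul_grpSum, Nat.cast_inj]
    refine Set.ncard_congr' (f.toEquiv.subtypeEquiv fun x => ?_)
    change r x a ∧ r (x⁻¹ * g) b ↔ r (f x) a ∧ r ((f x)⁻¹ * f g) b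
    rw [← map_inv, ← map_mul, hmem, hmem]

lemma isCayleyIso_iff {A A' : SchurRing G} {f : G ≃* G} :
    IsCayleyIso A A' f ↔ A.setoid = A'.setoid.comap f := by
  have hcomap : (fun X : Set G => f '' X) '' (A'.setoid.comap f).classes = A'.basicSets := by
    rw [← A'.classes_setoid]
    have himage (g : G) : f '' {x | A'.setoid (f x) (f g)} = {y | A'.setoid y (f g)} :=
      Set.image_preimage_eq {y | A'.setoid y (f g)} f.surjective
    refine Set.Subset.antisymm ?_ ?_
    · rintro _ ⟨_, ⟨g, rfl⟩, rfl⟩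
      exact ⟨f g, himage g⟩
    · rintro _ ⟨h, rfl⟩
      obtain ⟨g, rfl⟩ := f.surjective h
      exact ⟨_, ⟨g, rfl⟩, himage g⟩
  rw [IsCayleyIso, ← hcomap, ← A.classes_setoid, Setoid.classes_inj]
  exact f.injective.image_injective.image_injective.eq_iff

end FiniteGroup

lemma eq_ker_of_rel_iff {α β : Type*} {r : Setoid α} {c : α → β} (S : Set α)
    (hS : ∀ x, ∃ a ∈ S, c x = c a) (h : ∀ a ∈ S, ∀ x, r x a ↔ c x = c a) : r = .ker c := by
  ext x y
  obtain ⟨a, ha, hya⟩ := hS y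
  have hya' : r y a := (h a ha y).mpr hya
  exact ⟨fun hxy => ((h a ha x).mp (r.trans hxy hya')).trans hya.symm,
    fun hxy => r.trans ((h a ha x).mpr (hxy.trans hya)) (r.symm hya')⟩

section ENine

local notation "E₉" => Multiplicative (ZMod 3 × ZMod 3)

/-- The element of `E₉` with given coordinates. -/
def vec (x y : ZMod 3) : E₉ := ofAdd (x, y)

/-- The endomorphism of `E₉` sending the standard basis to `u` and `v`. -/
def homOfBasis (u v : E₉) : E₉ →* E₉ where
  toFun g := ofAdd (g.toAdd.1 • u.toAdd + g.toAdd.2 • v.toAdd)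
  map_one' := by simp
  map_mul' g h := by
    rw [← ofAdd_add, toAdd_mul, Prod.fst_add, Prod.snd_add, add_smul, add_smul, add_add_add_comm]

set_option synthInstance.maxSize 256 in
/-- The solution `u = (ab)⁻¹`, `v = a⁻¹b` of `uv = a`, `uv⁻¹ = b` in exponent three. -/
lemma exists_mulEquiv_vec {a b : E₉} (ha : a ≠ 1) (hb : b ≠ 1) (hab : a ≠ b) (hab' : a ≠ b⁻¹) :
    ∃ f : E₉ ≃* E₉, f (vec 1 1) = a ∧ f (vec 1 (-1)) = b := by
  have hf : ∀ a b : E₉, a ≠ 1 → b ≠ 1 → a ≠ b → a ≠ b⁻¹ →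
      homOfBasis (a * b)⁻¹ (a⁻¹ * b) (vec 1 1) = a ∧
      homOfBasis (a * b)⁻¹ (a⁻¹ * b) (vec 1 (-1)) = b ∧
      ∀ g, homOfBasis (a * b)⁻¹ (a⁻¹ * b) g = 1 → g = 1 := by
    decide +kernel
  obtain ⟨h₁, h₂, hinj⟩ := hf a b ha hb hab hab'
  exact ⟨.ofBijective _ (Finite.injective_iff_bijective.mp ((injective_iff_map_eq_one _).mpr hinj)),
    h₁, h₂⟩

/-- The coloring whose fibers are the basic sets of the wreath product along the second coordinate
subgroup of the partitions of `ZMod 3` into fibers of `σ` and `ρ`. -/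
def wreathColoring (σ ρ : ZMod 3 → ZMod 3) (g : E₉) : ZMod 3 × ZMod 3 :=
  (σ g.toAdd.1, if g.toAdd.1 = 0 then ρ g.toAdd.2 else 0)

/-- The coloring whose fibers are the basic sets of the tensor product of the partitions of
`ZMod 3` into fibers of `σ` and `ρ`. -/
def tensorColoring (σ ρ : ZMod 3 → ZMod 3) (g : E₉) : ZMod 3 × ZMod 3 :=
  (σ g.toAdd.1, ρ g.toAdd.2)

/-- Colorings of `E₉` whose fibers are the basic sets of the ten S-rings. Identifying `(x, y)` with
`x + iy` in the field of nine elements, the first three are `z ^ 8`, `z ^ 4` and `z ^ 2`. -/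
def standardColoring : Fin 10 → E₉ → ZMod 3 × ZMod 3 :=
  ![fun g => ((g.toAdd.1 ^ 2 + g.toAdd.2 ^ 2) ^ 2, 0),
    fun g => (g.toAdd.1 ^ 2 + g.toAdd.2 ^ 2, 0),
    fun g => (g.toAdd.1 ^ 2 - g.toAdd.2 ^ 2, 2 * g.toAdd.1 * g.toAdd.2),
    wreathColoring (· ^ 2) (· ^ 2), wreathColoring (· ^ 2) id,
    wreathColoring id (· ^ 2), wreathColoring id id,
    tensorColoring (· ^ 2) (· ^ 2), tensorColoring id (· ^ 2), tensorColoring id id]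

lemma standardColoring_eq_one : ∀ i g, standardColoring i g = standardColoring i 1 → g = 1 := by
  decide +kernel

set_option synthInstance.maxSize 256 in
lemma exists_mulEquiv_of_standardColoring_eq {i : Fin 10} {g h : E₉}
    (hgh : standardColoring i g = standardColoring i h) :
    ∃ f : E₉ ≃* E₉, f g = h ∧ ∀ x, standardColoring i (f x) = standardColoring i x := by
  have hhom : ∀ i g h, standardColoring i g = standardColoring i h → ∃ u v, homOfBasis u v g = h ∧
      ∀ x, standardColoring i (homOfBasis u v x) = standardColoring i x := by
    decide +kernel
  obtain ⟨u, v, hg, hcol⟩ := hhom i g h hgh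
  have hinj : Function.Injective (homOfBasis u v) := (injective_iff_map_eq_one _).mpr fun x hx =>
    standardColoring_eq_one i x (by rw [← hcol, hx])
  exact ⟨.ofBijective _ (Finite.injective_iff_bijective.mp hinj), hg, hcol⟩

/-- The ten S-rings over `E₉`. -/
def standard (i : Fin 10) : SchurRing E₉ :=
  ofHomogeneous (.ker (standardColoring i)) (standardColoring_eq_one i)
    fun _ _ => exists_mulEquiv_of_standardColoring_eq

lemma setoid_standard (i : Fin 10) : (standard i).setoid = .ker (standardColoring i) :=
  Setoid.mkClasses_classes _

/-- The number of related pairs is an isomorphism invariant. -/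
lemma standardColoring_pairs_injective : Function.Injective fun i =>
    #{p : E₉ × E₉ | standardColoring i p.1 = standardColoring i p.2} := by
  decide +kernel

lemma eq_of_ker_standardColoring_eq_comap {i j : Fin 10} (f : E₉ ≃* E₉)
    (h : Setoid.ker (standardColoring i) = (Setoid.ker (standardColoring j)).comap f) : i = j :=
  standardColoring_pairs_injective <|
    Finset.card_equiv (f.toEquiv.prodCongr f.toEquiv) fun p => by
      simpa using Setoid.ext_iff.mp h p.1 p.2

/-- The relation `r` is the partition of one of the ten S-rings in suitable coordinates. -/
def IsStandard (r : Setoid E₉) : Prop :=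
  ∃ i, ∃ f : E₉ ≃* E₉, r = (Setoid.ker (standardColoring i)).comap f

lemma isStandard_ker (i : Fin 10) : IsStandard (.ker (standardColoring i)) :=
  ⟨i, .refl _, rfl⟩

variable {r : Setoid E₉}

lemma IsStandard.of_comap {f : E₉ ≃* E₉} (h : IsStandard (r.comap f)) : IsStandard r := by
  obtain ⟨i, f', h⟩ := h
  refine ⟨i, f.symm.trans f', ?_⟩
  rw [MulEquiv.coe_trans, Setoid.comap_comp, ← h, ← Setoid.comap_comp, f.self_comp_symm,
    Setoid.comap_id]

lemma eq_one_or_diagonal_or_axis : ∀ x : E₉, x = 1 ∨ x.toAdd.1 * x.toAdd.2 ≠ 0 ∨ x = vec 1 0 ∨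
    x = (vec 1 0)⁻¹ ∨ x = vec 0 1 ∨ x = (vec 0 1)⁻¹ := by
  decide

lemma not_subset_mul_self : ∀ X : Finset E₉, X.Nonempty → (∀ x ∈ X, x⁻¹ ∉ X) → ¬ X ⊆ X * X := by
  decide +kernel

namespace IsSchurRel

/-- If an antisymmetric class met its own square, it would be contained in it. -/
lemma not_rel_mul (hr : IsSchurRel r) {a b c : E₉} (ha : ¬ r a⁻¹ a) (hb : r b a) (hc : r c a) :
    ¬ r (b * c) a := by
  classical
  intro hbc
  refine not_subset_mul_self {x | r x a} ⟨a, by simp⟩ (fun x hx hx' => ha ?_) fun x hx => ?_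
  · simp only [mem_filter_univ] at hx hx'
    exact r.trans (hr.inv (r.symm hx)) hx'
  · simp only [mem_filter_univ] at hx
    obtain ⟨b', c', hb', hc', rfl⟩ := hr.exists_mul_eq (r.trans hx (r.symm hbc))
    exact mul_mem_mul (by simpa using r.trans hb' hb) (by simpa using r.trans hc' hc)

lemma eq_ker_tensorColoring (hr : IsSchurRel r)
    (h : ∀ x, r x (vec 1 1) ↔ x = vec 1 1 ∨ x = vec 1 (-1)) :
    r = .ker (tensorColoring id (· ^ 2)) := by
  have hsingle (x : E₉) (hx : r x (vec (-1) 0)) : x = vec (-1) 0 := by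
    have hx_eq : x⁻¹ = vec 1 1 ∨ x⁻¹ = vec 1 (-1) ∨ x = vec (-1) 0 := by
      obtain ⟨a, b, ha, hb, rfl⟩ := hr.exists_mul_eq (a := vec 1 1) (b := vec 1 (-1)) hx
      rcases (h a).mp ha with rfl | rfl <;>
        rcases (h b).mp (r.trans hb ((h _).mpr (.inr rfl))) with rfl | rfl <;> decide
    have hx_inv : r (vec 1 0) x⁻¹ := r.symm (hr.inv hx)
    have hnot : ¬ r (vec 1 0) (vec 1 1) := by rw [h]; decide
    rcases hx_eq with hx' | hx' | hx'
    · exact absurd (hx' ▸ hx_inv) hnot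
    · exact absurd (r.trans (hx' ▸ hx_inv) ((h _).mpr (.inr rfl))) hnot
    · exact hx'
  refine eq_ker_of_rel_iff
    {1, vec (-1) 0, (vec (-1) 0)⁻¹, vec 1 1, (vec 1 1)⁻¹, vec (-1) 0 * vec 1 1}
    (by simp only [Set.mem_insert_iff, Set.mem_singleton_iff]; decide) ?_
  have hsingle_iff (x : E₉) : r x (vec (-1) 0) ↔ x = vec (-1) 0 :=
    ⟨hsingle x, fun hx => hx ▸ r.refl _⟩
  rintro _ (rfl | rfl | rfl | rfl | rfl | rfl) x
  · rw [hr.rel_one_iff]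
    decide +revert
  · rw [hsingle_iff]
    decide +revert
  · rw [hr.rel_inv_comm, hsingle_iff]
    decide +revert
  · rw [h]
    decide +revert
  · rw [hr.rel_inv_comm, h]
    decide +revert
  · rw [← hr.rel_inv_mul_iff hsingle, h]
    decide +revert

lemma eq_ker_wreathColoring (hr : IsSchurRel r) {σ ρ : ZMod 3 → ZMod 3}
    (hσ : σ = id ∨ σ = (· ^ 2)) (hρ : ρ = id ∨ ρ = (· ^ 2))
    (h₁ : ∀ x, r x (vec 1 1) ↔ σ x.toAdd.1 = 1)
    (h₂ : ∀ x, r x (vec 0 1) ↔ x.toAdd.1 = 0 ∧ ρ x.toAdd.2 = 1) :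
    r = .ker (wreathColoring σ ρ) := by
  refine eq_ker_of_rel_iff {1, vec 1 1, (vec 1 1)⁻¹, vec 0 1, (vec 0 1)⁻¹} ?_ ?_
  · simp only [Set.mem_insert_iff, Set.mem_singleton_iff]
    rcases hσ with rfl | rfl <;> rcases hρ with rfl | rfl <;> decide
  · rintro _ (rfl | rfl | rfl | rfl | rfl) x <;>
      simp only [hr.rel_one_iff, hr.rel_inv_comm, h₁, h₂] <;> clear h₁ h₂ <;>
      rcases hσ with rfl | rfl <;> rcases hρ with rfl | rfl <;> decide +revert

lemma isStandard_of_wreath (hr : IsSchurRel r) {σ : ZMod 3 → ZMod 3} (hσ : σ = id ∨ σ = (· ^ 2))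
    (h : ∀ x, r x (vec 1 1) ↔ σ x.toAdd.1 = 1) : IsStandard r := by
  have hσ_zero : ∀ x : E₉, x.toAdd.1 = 0 → ¬ r x (vec 1 1) := by
    simp only [h]
    rcases hσ with rfl | rfl <;> decide
  have hcases (x : E₉) (hx : r x (vec 0 1)) : x = vec 0 1 ∨ x = (vec 0 1)⁻¹ := by
    have hσ_cases : ∀ x : E₉, x = vec 0 1 ∨ x = (vec 0 1)⁻¹ ∨ x = 1 ∨ σ x.toAdd.1 = 1 ∨
        σ x⁻¹.toAdd.1 = 1 := by
      rcases hσ with rfl | rfl <;> decide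
    rcases hσ_cases x with hx' | hx' | rfl | hx' | hx'
    · exact .inl hx'
    · exact .inr hx'
    · exact absurd (hr.eq_one (r.symm hx)) (by decide)
    · exact absurd (r.trans (r.symm hx) ((h x).mpr hx')) (hσ_zero _ rfl)
    · exact absurd (r.trans (hr.inv (r.symm hx)) ((h _).mpr hx')) (hσ_zero _ rfl)
  by_cases hinv : r (vec 0 1)⁻¹ (vec 0 1)
  · have h₂ (x : E₉) : r x (vec 0 1) ↔ x.toAdd.1 = 0 ∧ x.toAdd.2 ^ 2 = 1 :=
      Iff.trans (b := x = vec 0 1 ∨ x = (vec 0 1)⁻¹)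
        ⟨hcases x, by rintro (rfl | rfl); exacts [r.refl _, hinv]⟩ (by decide +revert)
    rw [hr.eq_ker_wreathColoring hσ (.inr rfl) h h₂]
    rcases hσ with rfl | rfl
    exacts [isStandard_ker 5, isStandard_ker 3]
  · have h₂ (x : E₉) : r x (vec 0 1) ↔ x.toAdd.1 = 0 ∧ x.toAdd.2 = 1 :=
      Iff.trans (b := x = vec 0 1)
        ⟨fun hx => (hcases x hx).resolve_right (by rintro rfl; exact hinv hx),
          fun hx => hx ▸ r.refl _⟩ (by decide +revert)
    rw [hr.eq_ker_wreathColoring hσ (.inl rfl) h h₂]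
    rcases hσ with rfl | rfl
    exacts [isStandard_ker 6, isStandard_ker 4]

lemma isStandard_of_not_rel_inv (hr : IsSchurRel r) (hinv : ¬ r (vec 1 1)⁻¹ (vec 1 1))
    (h : r (vec 1 (-1)) (vec 1 1)) : IsStandard r := by
  have hfst (x : E₉) (hx : r x (vec 1 1)) :
      x = vec 1 1 ∨ x = vec 1 (-1) ∨ x = vec 1 0 := by
    have hmul {b : E₉} (hb : r b (vec 1 1)) := hr.not_rel_mul hinv hx hb
    have hne : x ≠ 1 := by
      rintro rfl
      exact absurd (hr.eq_one (r.symm hx)) (by decide)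
    have hx_inv : ¬ r x⁻¹ (vec 1 1) := fun hx' =>
      hinv (r.trans (hr.inv (r.symm hx)) hx')
    have hcases : ∀ x : E₉, x = vec 1 1 ∨ x = vec 1 (-1) ∨ x = vec 1 0 ∨ x = 1 ∨
        x⁻¹ = vec 1 1 ∨ x⁻¹ = vec 1 (-1) ∨ x * vec 1 1 = vec 1 (-1) ∨ x * vec 1 (-1) = vec 1 1 ∨
        x = vec 1 1 * vec 1 (-1) := by decide
    rcases hcases x with hx' | hx' | hx' | hx' | hx' | hx' | hx' | hx' | hx'
    · exact .inl hx'
    · exact .inr (.inl hx')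
    · exact .inr (.inr hx')
    · exact absurd hx' hne
    · exact absurd (hx' ▸ r.refl _) hx_inv
    · exact absurd (hx' ▸ h) hx_inv
    · exact absurd (hx' ▸ h) (hmul (r.refl _))
    · exact absurd (hx' ▸ r.refl _) (hmul h)
    · exact absurd (hx' ▸ hx) (hr.not_rel_mul hinv (r.refl _) h)
  by_cases hmid : r (vec 1 0) (vec 1 1)
  · refine hr.isStandard_of_wreath (.inl rfl) fun x => ⟨fun hx => ?_, fun hx => ?_⟩
    · rcases hfst x hx with rfl | rfl | rfl <;> rfl
    · have : x = vec 1 1 ∨ x = vec 1 (-1) ∨ x = vec 1 0 := by decide +revert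
      rcases this with rfl | rfl | rfl
      exacts [r.refl _, h, hmid]
  · rw [hr.eq_ker_tensorColoring fun x => ⟨fun hx => ?_, ?_⟩]
    · exact isStandard_ker 8
    · rcases hfst x hx with hx' | hx' | rfl
      exacts [.inl hx', .inr hx', absurd hx hmid]
    · rintro (rfl | rfl)
      exacts [r.refl _, h]

/-- Otherwise translation by `a` would preserve the diagonal class. -/
lemma not_singleton_of_diagonal (hr : IsSchurRel r)
    (hdiag : ∀ x, r x (vec 1 1) ↔ x.toAdd.1 * x.toAdd.2 ≠ 0) {a x y : E₉}
    (hx : x.toAdd.1 * x.toAdd.2 ≠ 0) (hy : y.toAdd.1 * y.toAdd.2 ≠ 0)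
    (hax : (a * x).toAdd.1 * (a * x).toAdd.2 ≠ 0) (hay : (a * y).toAdd.1 * (a * y).toAdd.2 = 0) :
    ¬ ∀ b, r b a → b = a := by
  refine fun ha => (hdiag (a * y)).mp ?_ hay
  have hyx : r y x := r.trans ((hdiag y).mpr hy) (r.symm ((hdiag x).mpr hx))
  exact r.trans (hr.rel_mul_left ha hyx) ((hdiag _).mpr hax)

lemma isStandard_of_diagonal (hr : IsSchurRel r) (h : ∀ a, r a⁻¹ a ∨ ∀ b, r b a → b = a)
    (hdiag : ∀ x, r x (vec 1 1) ↔ x.toAdd.1 * x.toAdd.2 ≠ 0) : IsStandard r := by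
  have hinv₁ : r (vec 1 0)⁻¹ (vec 1 0) :=
    (h _).resolve_right <| hr.not_singleton_of_diagonal hdiag (x := vec 1 1) (y := vec (-1) 1)
      (by decide) (by decide) (by decide) (by decide)
  have hinv₂ : r (vec 0 1)⁻¹ (vec 0 1) :=
    (h _).resolve_right <| hr.not_singleton_of_diagonal hdiag (x := vec 1 1) (y := vec 1 (-1))
      (by decide) (by decide) (by decide) (by decide)
  have haxis {a x : E₉} (ha : a ≠ 1) (ha' : a.toAdd.1 * a.toAdd.2 = 0) (hxa : r x a) :
      x = vec 1 0 ∨ x = (vec 1 0)⁻¹ ∨ x = vec 0 1 ∨ x = (vec 0 1)⁻¹ := by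
    rcases eq_one_or_diagonal_or_axis x with rfl | hx | hx
    · exact absurd (hr.eq_one (r.symm hxa)) ha
    · exact absurd ha' ((hdiag a).mp (r.trans (r.symm hxa) ((hdiag x).mpr hx)))
    · exact hx
  by_cases h₂₁ : r (vec 0 1) (vec 1 0)
  · have h₁ (x : E₉) : r x (vec 1 0) ↔ x = vec 1 0 ∨ x = (vec 1 0)⁻¹ ∨ x = vec 0 1 ∨
        x = (vec 0 1)⁻¹ := by
      refine ⟨haxis (by decide) (by decide), ?_⟩
      rintro (rfl | rfl | rfl | rfl)
      exacts [r.refl _, hinv₁, h₂₁, r.trans hinv₂ h₂₁]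
    have hr_eq : r = .ker (standardColoring 1) := by
      refine eq_ker_of_rel_iff {1, vec 1 1, vec 1 0}
        (by simp only [Set.mem_insert_iff, Set.mem_singleton_iff]; decide) ?_
      rintro _ (rfl | rfl | rfl) x <;> simp only [hr.rel_one_iff, hdiag, h₁] <;>
        decide +revert
    exact hr_eq ▸ isStandard_ker 1
  · have h₁ (x : E₉) : r x (vec 1 0) ↔ x = vec 1 0 ∨ x = (vec 1 0)⁻¹ := by
      refine ⟨fun hx => ?_, by rintro (rfl | rfl); exacts [r.refl _, hinv₁]⟩
      rcases haxis (by decide) (by decide) hx with hx' | hx' | rfl | rfl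
      exacts [.inl hx', .inr hx', absurd hx h₂₁, absurd (r.trans (r.symm hinv₂) hx) h₂₁]
    have h₂ (x : E₉) : r x (vec 0 1) ↔ x = vec 0 1 ∨ x = (vec 0 1)⁻¹ := by
      refine ⟨fun hx => ?_, by rintro (rfl | rfl); exacts [r.refl _, hinv₂]⟩
      rcases haxis (by decide) (by decide) hx with rfl | rfl | hx' | hx'
      exacts [absurd (r.symm hx) h₂₁, absurd (r.trans (r.symm hx) hinv₁) h₂₁, .inl hx', .inr hx']
    have hr_eq : r = .ker (standardColoring 7) := by
      refine eq_ker_of_rel_iff {1, vec 1 1, vec 1 0, vec 0 1}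
        (by simp only [Set.mem_insert_iff, Set.mem_singleton_iff]; decide) ?_
      rintro _ (rfl | rfl | rfl | rfl) x <;>
        simp only [hr.rel_one_iff, hdiag, h₁, h₂] <;>
        decide +revert
    exact hr_eq ▸ isStandard_ker 7

lemma rel_diagonal_iff (hr : IsSchurRel r) (hinv : r (vec 1 1)⁻¹ (vec 1 1))
    (hrel : r (vec 1 (-1)) (vec 1 1)) (x : E₉) :
    r x (vec 1 1) ↔ x.toAdd.1 * x.toAdd.2 ≠ 0 ∨
      x ≠ 1 ∧ x.toAdd.2 = 0 ∧ r (vec 1 0) (vec 1 1) ∨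
      x ≠ 1 ∧ x.toAdd.1 = 0 ∧ r (vec 0 1) (vec 1 1) := by
  have hone : ¬ r 1 (vec 1 1) := fun h => absurd (hr.eq_one (r.symm h)) (by decide)
  have hinv_iff (y : E₉) : r y⁻¹ (vec 1 1) ↔ r y (vec 1 1) := by
    rw [← hr.rel_inv_comm]
    exact ⟨fun hy => r.trans hy hinv, fun hy => r.trans hy (r.symm hinv)⟩
  rcases eq_one_or_diagonal_or_axis x with rfl | hx | rfl | rfl | rfl | rfl
  · simp [hone]
  · have hx_cases : x = vec 1 1 ∨ x = vec 1 (-1) ∨ x = (vec 1 1)⁻¹ ∨ x = (vec 1 (-1))⁻¹ := by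
      decide +revert
    refine iff_of_true ?_ (.inl hx)
    rcases hx_cases with rfl | rfl | rfl | rfl
    exacts [r.refl _, hrel, hinv, (hinv_iff _).mpr hrel]
  · simp [vec]
  · simpa [vec] using hinv_iff (vec 1 0)
  · simp [vec]
  · simpa [vec] using hinv_iff (vec 0 1)

lemma isStandard_of_rel_inv_or_singleton (hr : IsSchurRel r)
    (h : ∀ a, r a⁻¹ a ∨ ∀ b, r b a → b = a) (hrel : r (vec 1 (-1)) (vec 1 1)) :
    IsStandard r := by
  have hinv : r (vec 1 1)⁻¹ (vec 1 1) :=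
    (h _).resolve_right fun hsingle => absurd (hsingle _ hrel) (by decide)
  have hclass := hr.rel_diagonal_iff hinv hrel
  by_cases hx : r (vec 1 0) (vec 1 1) <;> by_cases hy : r (vec 0 1) (vec 1 1) <;>
    simp only [hx, hy, and_true, and_false, or_false] at hclass
  · have hr_eq : r = .ker (standardColoring 0) := by
      refine eq_ker_of_rel_iff {1, vec 1 1}
        (by simp only [Set.mem_insert_iff, Set.mem_singleton_iff]; decide) ?_
      rintro _ (rfl | rfl) x <;> simp only [hr.rel_one_iff, hclass] <;> decide +revert
    exact hr_eq ▸ isStandard_ker 0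
  · refine hr.isStandard_of_wreath (.inr rfl) fun x => (hclass x).trans ?_
    decide +revert
  · let swap : E₉ ≃* E₉ := AddEquiv.prodComm.toMultiplicative
    refine .of_comap (f := swap) ((hr.comap swap).isStandard_of_wreath (.inr rfl) fun x =>
      (hclass _).trans ?_)
    decide +revert
  · refine hr.isStandard_of_diagonal h fun x => (hclass x).trans ?_
    simp

lemma isStandard_of_eq_or_eq_inv (hr : IsSchurRel r) (h : ∀ a b, r a b → a = b ∨ a = b⁻¹) :
    IsStandard r := by
  rcases hr.eq_bot_or_rel_inv (by decide) h with rfl | hinv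
  · have hbot : ⊥ = Setoid.ker (standardColoring 9) := by
      ext x y
      rw [Setoid.bot_def, Setoid.ker_def]
      decide +revert
    exact hbot ▸ isStandard_ker 9
  · have hr_eq : r = Setoid.ker (standardColoring 2) := by
      ext x y
      exact Iff.trans (b := x = y ∨ x = y⁻¹)
        ⟨h x y, by rintro (rfl | rfl); exacts [r.refl _, hinv _]⟩
        (by rw [Setoid.ker_def]; decide +revert)
    exact hr_eq ▸ isStandard_ker 2

lemma exists_mulEquiv_vec_of_rel (hr : IsSchurRel r) {a b : E₉} (hab : r b a) (hne : b ≠ a)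
    (hne_inv : b ≠ a⁻¹) : ∃ f : E₉ ≃* E₉, f (vec 1 1) = a ∧ f (vec 1 (-1)) = b := by
  refine exists_mulEquiv_vec ?_ ?_ hne.symm (fun h => hne_inv (by simp [h]))
  · rintro rfl
    exact hne (hr.eq_one hab)
  · rintro rfl
    exact hne (hr.eq_one (r.symm hab)).symm

lemma isStandard (hr : IsSchurRel r) : IsStandard r := by
  by_cases h : ∀ a, r a⁻¹ a ∨ ∀ b, r b a → b = a
  · by_cases hpair : ∀ a b, r a b → a = b ∨ a = b⁻¹
    · exact hr.isStandard_of_eq_or_eq_inv hpair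
    · push Not at hpair
      obtain ⟨b, a, hab, hne, hne_inv⟩ := hpair
      obtain ⟨f, rfl, rfl⟩ := hr.exists_mulEquiv_vec_of_rel hab hne hne_inv
      refine .of_comap (f := f)
        ((hr.comap f).isStandard_of_rel_inv_or_singleton (fun c => ?_) hab)
      refine (h (f c)).imp (fun hc => ?_) fun hc d hd => f.injective (hc _ hd)
      rwa [Setoid.comap_rel, map_inv]
  · push Not at h
    obtain ⟨a, hinv, b, hab, hne⟩ := h
    obtain ⟨f, rfl, rfl⟩ := hr.exists_mulEquiv_vec_of_rel hab hne (by rintro rfl; exact hinv hab)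
    refine .of_comap (f := f) ((hr.comap f).isStandard_of_not_rel_inv ?_ hab)
    rwa [Setoid.comap_rel, map_inv]

end IsSchurRel

end ENine

end SchurRing

theorem ten_srings_over_E9 :
    ∃ R : Fin 10 → SchurRing (Multiplicative (ZMod 3 × ZMod 3)),
      (∀ A : SchurRing (Multiplicative (ZMod 3 × ZMod 3)),
        ∃ (i : Fin 10) (f : Multiplicative (ZMod 3 × ZMod 3) ≃* Multiplicative (ZMod 3 × ZMod 3)),
          IsCayleyIso A (R i) f) ∧
      (∀ i j : Fin 10, i ≠ j →
        ¬ ∃ f : Multiplicative (ZMod 3 × ZMod 3) ≃* Multiplicative (ZMod 3 × ZMod 3),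
            IsCayleyIso (R i) (R j) f) := by
  refine ⟨SchurRing.standard, fun A => ?_, fun i j hij ⟨f, hf⟩ => hij ?_⟩
  · obtain ⟨i, f, h⟩ := A.isSchurRel_setoid.isStandard
    exact ⟨i, f, SchurRing.isCayleyIso_iff.mpr (by rw [SchurRing.setoid_standard, h])⟩
  · refine SchurRing.eq_of_ker_standardColoring_eq_comap f ?_
    simpa only [SchurRing.setoid_standard] using SchurRing.isCayleyIso_iff.mp hf
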